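/- (k-scaled adaptive coefficient yields gradient ratio exactly k.) Let β > 0, k > 0, and P_w, P_l > 0 be real numbers, and set the stop-gradient coefficient β_w = k·β·P_w/P_l, treated as a constant. Let d_w be the derivative at P_w of P ↦ −log σ(β_w·log P − β·log P_l), and let d_l be the derivative at P_l of P ↦ −log σ(β_w·log P_w − β·log P). Then d_l ≠ 0 and |d_w| / |d_l| = k; in particular k > 1 biases updates toward reinforcing the preferred response and k < 1 toward suppressing the dispreferred response. -/

import Mathlib

/-!
Since `-log σ(t) = log (1 + exp (-t))`, the outer derivative is `-exp (-t) / (1 + exp (-t))`, which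
is nonzero. Both partial derivatives share this factor at the same point `t`, so the ratio is that of
the inner derivatives `β_w / P_w` and `-β / P_l`, which is `k` in absolute value by the choice
of `β_w`.
-/

/-- The logistic sigmoid σ(t) = 1/(1 + exp(−t)). -/
noncomputable def sigmoid (t : ℝ) : ℝ := 1 / (1 + Real.exp (-t))

theorem hasDerivAt_neg_log_sigmoid (t : ℝ) :
    HasDerivAt (fun t : ℝ => -Real.log (sigmoid t))
      (-Real.exp (-t) / (1 + Real.exp (-t))) t := by
  have hfun : (fun t : ℝ => -Real.log (sigmoid t)) = fun t => Real.log (1 + Real.exp (-t)) := by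
    funext t
    simp [sigmoid]
  rw [hfun]
  have hexp : HasDerivAt (fun t : ℝ => 1 + Real.exp (-t)) (-Real.exp (-t)) t := by
    simpa using ((hasDerivAt_neg t).exp).const_add 1
  exact hexp.log (by positivity)

/-- k-scaled adaptive coefficient yields gradient ratio exactly k:
with the stop-gradient coefficient `β_w = k·β·P_w/P_l` treated as a constant,
the contrastive loss has `d_l ≠ 0` and `|d_w| / |d_l| = k`. -/
theorem kscaled_adaptive_gradient_ratio (β k Pw Pl βw : ℝ) (hβ : 0 < β) (hk : 0 < k)
    (hPw : 0 < Pw) (hPl : 0 < Pl) (hβw : βw = k * β * Pw / Pl) :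
    deriv (fun P : ℝ => -Real.log (sigmoid (βw * Real.log Pw - β * Real.log P))) Pl ≠ 0 ∧
    |deriv (fun P : ℝ => -Real.log (sigmoid (βw * Real.log P - β * Real.log Pl))) Pw| /
      |deriv (fun P : ℝ => -Real.log (sigmoid (βw * Real.log Pw - β * Real.log P))) Pl| =
      k := by
  have hl : HasDerivAt (fun P : ℝ => βw * Real.log Pw - β * Real.log P) (-(β * Pl⁻¹)) Pl :=
    ((Real.hasDerivAt_log hPl.ne').const_mul β).const_sub _
  have hw : HasDerivAt (fun P : ℝ => βw * Real.log P - β * Real.log Pl) (βw * Pw⁻¹) Pw :=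
    ((Real.hasDerivAt_log hPw.ne').const_mul βw).sub_const _
  have hdl := (HasDerivAt.comp Pl (hasDerivAt_neg_log_sigmoid _) hl).deriv
  have hdw := (HasDerivAt.comp Pw (hasDerivAt_neg_log_sigmoid _) hw).deriv
  simp only [Function.comp_def] at hdl hdw
  rw [hdl, hdw]
  set t := βw * Real.log Pw - β * Real.log Pl
  have hc : -Real.exp (-t) / (1 + Real.exp (-t)) ≠ 0 :=
    div_ne_zero (neg_ne_zero.mpr (Real.exp_pos _).ne') (by positivity)
  have hinner : βw * Pw⁻¹ = k * (β * Pl⁻¹) := by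
    rw [hβw]
    field_simp
  have hb : 0 < β * Pl⁻¹ := by positivity
  refine ⟨mul_ne_zero hc (neg_ne_zero.mpr hb.ne'), ?_⟩
  rw [hinner, abs_mul, abs_mul (_ / _) (-_), mul_div_mul_left _ _ (abs_ne_zero.mpr hc), abs_neg,
    abs_mul, abs_of_pos hk, mul_div_cancel_right₀ _ (abs_ne_zero.mpr hb.ne')]
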